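/- arXiv:math/9804007 — 2 statements merged into one kernel-verified Lean document; each statement's English description precedes it below -/
import Mathlib

section
/- Let U ⊆ ℂ² be an open neighbourhood of the closed unit bidisc P̄ = {(z₁,z₂) ∈ ℂ² : |z₁| ≤ 1 and |z₂| ≤ 1}, and let t₁₁, t₂₂ : U → ℝ and t₁₂ : U → ℂ be C¹ functions such that pointwise on U one has t₁₁ ≥ 0, t₂₂ ≥ 0 and t₁₁·t₂₂ ≥ |t₁₂|² (positivity of the (1,1)-form with coefficient matrix ((t₁₁, t₁₂),(conj t₁₂, t₂₂))), and such that the closedness identities ∂t₂₂/∂z₁ = ∂t₁₂/∂z₂ and ∂t₁₁/∂z₂ = ∂(conj t₁₂)/∂z₁ hold on U (Wirtinger derivatives). Let M ≥ 0 be such that t₁₁(z) ≤ M, t₂₂(z) ≤ M and |t₁₂(z)| ≤ M for every z in the closed Hartogs annulus Ā = {(z₁,z₂) ∈ P̄ : max(|z₁|, |z₂|) ≥ 1/2}. Then there is an absolute constant C, independent of t₁₁, t₁₂, t₂₂ and of M, such that ∫_P (t₁₁ + t₂₂ + 2·|t₁₂|) dλ ≤ C·M, where P is the open unit bidisc. (This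 uniform mass estimate for smooth closed positive (1,1)-forms on the bidisc from bounds on the Hartogs annulus is the analytic core of the paper's Theorem 2, the a priori estimate of the volume of graphs, formulas (2.4.1)–(2.4.3).) -/
open Metric MeasureTheory Complex

/-- The Wirtinger derivative `∂u/∂z₁ = ½(∂u/∂x₁ − i·∂u/∂y₁)` of a function
`u : ℂ × ℂ → ℂ`, computed from the real Fréchet derivative. -/
noncomputable def wirtingerFst (u : ℂ × ℂ → ℂ) (p : ℂ × ℂ) : ℂ :=
  (1 / 2 : ℂ) * (fderiv ℝ u p (1, 0) - Complex.I * fderiv ℝ u p (Complex.I, 0))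

/-- The Wirtinger derivative `∂u/∂z₂ = ½(∂u/∂x₂ − i·∂u/∂y₂)` of a function
`u : ℂ × ℂ → ℂ`, computed from the real Fréchet derivative. -/
noncomputable def wirtingerSnd (u : ℂ × ℂ → ℂ) (p : ℂ × ℂ) : ℂ :=
  (1 / 2 : ℂ) * (fderiv ℝ u p (0, 1) - Complex.I * fderiv ℝ u p (0, Complex.I))

/-!
Let `P` be the unit bidisc and `χ` a cut-off function supported in `P` and equal to `1` on the inner
bidisc. Against the test function `φ = χ · (|z₁|² - |z₂|²)`, closedness and two integrations by
parts show that `F = t₂₂ ∂₁∂̄₁φ - t₁₁ ∂₂∂̄₂φ` has integral zero over `P`. On the inner bidisc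
`∂₁∂̄₁φ = 1` and `∂₂∂̄₂φ = -1`, so there `F` is exactly the trace `t₁₁ + t₂₂`, while on the Hartogs
annulus both `F` and the trace are bounded by a multiple of `M`. Hence the integral of the trace is
at most a multiple of `M`, and `2 |t₁₂| ≤ t₁₁ + t₂₂` by positivity.
-/

open Topology
open scoped ComplexConjugate

lemma integrable_mul_of_tsupport_subset {X R : Type*} [TopologicalSpace X] [MeasurableSpace X]
    [OpensMeasurableSpace X] {μ : Measure X} [IsFiniteMeasureOnCompacts μ] [NormedRing R]
    {U : Set X} (hU : IsOpen U) {f g : X → R} (hf : ContinuousOn f U) (hg : Continuous g)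
    (hgc : HasCompactSupport g) (hgU : tsupport g ⊆ U) : Integrable (fun p => f p * g p) μ := by
  refine Continuous.integrable_of_hasCompactSupport (continuous_of_tsupport fun p hp => ?_)
    hgc.mul_left
  exact (hf.continuousAt (hU.mem_nhds (hgU (tsupport_mul_subset_right hp)))).mul hg.continuousAt

lemma add_le_re_mul_sub_mul_add {a b A B M : ℝ} {α β : ℂ} (ha : 0 ≤ a) (hb : 0 ≤ b)
    (haM : a ≤ M) (hbM : b ≤ M) (hα : ‖α‖ ≤ A) (hβ : ‖β‖ ≤ B) :
    a + b ≤ (a * α - b * β).re + (2 + A + B) * M := by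
  have hA : 0 ≤ A := (norm_nonneg α).trans hα
  have hB : 0 ≤ B := (norm_nonneg β).trans hβ
  have hα' : -α.re ≤ A := (neg_le_abs α.re).trans ((abs_re_le_norm α).trans hα)
  have hβ' : β.re ≤ B := (re_le_norm β).trans hβ
  calc a + b = (a * α - b * β).re + a * (1 + -α.re) + b * (1 + β.re) := by
        simp only [sub_re, re_ofReal_mul]
        ring
    _ ≤ (a * α - b * β).re + a * (1 + A) + b * (1 + B) := by gcongr
    _ ≤ (a * α - b * β).re + M * (1 + A) + M * (1 + B) := by gcongr
    _ = (a * α - b * β).re + (2 + A + B) * M := by ring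

section WirtingerDeriv

variable {E : Type*} [NormedAddCommGroup E] [NormedSpace ℝ E]

/-- The first order operator `½(∂_v − i ∂_w)` attached to two real directions `v`, `w`. On `ℂ`,
`∂/∂z` is the case `(v, w) = (1, i)` and `∂/∂z̄` the case `(v, w) = (1, -i)`, so that treating
arbitrary directions covers both kinds of Wirtinger derivative in every coordinate. -/
noncomputable def wirtingerDeriv (v w : E) (f : E → ℂ) (p : E) : ℂ :=
  (1 / 2 : ℂ) * (fderiv ℝ f p v - I * fderiv ℝ f p w)

lemma conj_wirtingerDeriv (v w : E) (f : E → ℂ) (p : E) :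
    conj (wirtingerDeriv v w f p) = wirtingerDeriv v (-w) (fun q => conj (f q)) p := by
  have hconj : fderiv ℝ (fun q => conj (f q)) p = conjCLE.toContinuousLinearMap ∘L fderiv ℝ f p :=
    conjCLE.comp_fderiv
  simp [wirtingerDeriv, hconj, map_ofNat]

lemma wirtingerDeriv_congr {f g : E → ℂ} {p : E} (v w : E) (h : f =ᶠ[𝓝 p] g) :
    wirtingerDeriv v w f =ᶠ[𝓝 p] wirtingerDeriv v w g := by
  filter_upwards [h.fderiv (𝕜 := ℝ)] with q hq
  rw [wirtingerDeriv, wirtingerDeriv, hq]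

lemma tsupport_wirtingerDeriv_subset (v w : E) (f : E → ℂ) :
    tsupport (wirtingerDeriv v w f) ⊆ tsupport f := by
  refine (closure_mono fun p hp => ?_).trans (tsupport_fderiv_subset ℝ)
  contrapose! hp
  simp [wirtingerDeriv, Function.notMem_support.mp hp]

lemma hasCompactSupport_wirtingerDeriv {f : E → ℂ} (hf : HasCompactSupport f) (v w : E) :
    HasCompactSupport (wirtingerDeriv v w f) :=
  hf.mono' (subset_closure.trans (tsupport_wirtingerDeriv_subset v w f))

lemma contDiff_wirtingerDeriv {n m : WithTop ℕ∞} {f : E → ℂ} (hf : ContDiff ℝ n f)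
    (hmn : m + 1 ≤ n) (v w : E) : ContDiff ℝ m (wirtingerDeriv v w f) := by
  have := hf.fderiv_right hmn
  unfold wirtingerDeriv
  fun_prop

lemma fderiv_wirtingerDeriv {f : E → ℂ} (hf : ContDiff ℝ 2 f) (v w p u : E) :
    fderiv ℝ (wirtingerDeriv v w f) p u =
      1 / 2 * (fderiv ℝ (fderiv ℝ f) p u v - I * fderiv ℝ (fderiv ℝ f) p u w) := by
  have hd : DifferentiableAt ℝ (fderiv ℝ f) p :=
    (hf.fderiv_right (m := 1) le_rfl).differentiable one_ne_zero p
  have happly (v : E) := hd.hasFDerivAt.clm_apply (hasFDerivAt_const v p)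
  have h : HasFDerivAt (wirtingerDeriv v w f) _ p :=
    ((happly v).fun_sub ((happly w).const_mul I)).const_mul (1 / 2)
  rw [h.fderiv]
  simp

lemma wirtingerDeriv_comm {f : E → ℂ} (hf : ContDiff ℝ 2 f) (v w v' w' : E) :
    wirtingerDeriv v w (wirtingerDeriv v' w' f) = wirtingerDeriv v' w' (wirtingerDeriv v w f) := by
  ext p
  have hsymm : IsSymmSndFDerivAt ℝ f p := hf.contDiffAt.isSymmSndFDerivAt (by simp)
  rw [wirtingerDeriv, wirtingerDeriv]
  simp only [fderiv_wirtingerDeriv hf, hsymm.eq v', hsymm.eq w']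
  ring

/-- The Levi form of `f` at `p` in the direction `v`, when `w = iv`: the mixed derivative
`∂²/∂ζ∂ζ̄ = ¼(∂_s² + ∂_t²)` at `ζ = s + it = 0` of `f (p + s v + t w)`. The case
`(v, w) = (e_j, i e_j)` is `∂²f/∂z_j∂z̄_j`. -/
noncomputable def leviForm (v w : E) (f : E → ℂ) : E → ℂ :=
  wirtingerDeriv v w (wirtingerDeriv v (-w) f)

lemma leviForm_congr {f g : E → ℂ} {p : E} (v w : E) (h : f =ᶠ[𝓝 p] g) :
    leviForm v w f p = leviForm v w g p :=
  (wirtingerDeriv_congr v w (wirtingerDeriv_congr v (-w) h)).eq_of_nhds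

lemma tsupport_leviForm_subset (v w : E) (f : E → ℂ) : tsupport (leviForm v w f) ⊆ tsupport f :=
  (tsupport_wirtingerDeriv_subset v w _).trans (tsupport_wirtingerDeriv_subset v (-w) f)

lemma hasCompactSupport_leviForm {f : E → ℂ} (hf : HasCompactSupport f) (v w : E) :
    HasCompactSupport (leviForm v w f) :=
  hasCompactSupport_wirtingerDeriv (hasCompactSupport_wirtingerDeriv hf v (-w)) v w

lemma continuous_leviForm {f : E → ℂ} (hf : ContDiff ℝ 2 f) (v w : E) :
    Continuous (leviForm v w f) :=
  (contDiff_wirtingerDeriv (m := 0)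
    (contDiff_wirtingerDeriv (m := 1) hf le_rfl v (-w)) (by simp) v w).continuous

variable [MeasurableSpace E] [BorelSpace E] {μ : Measure E} {U : Set E}

lemma integrable_mul_leviForm [IsFiniteMeasureOnCompacts μ] (hU : IsOpen U) {a : E → ℝ} {φ : E → ℂ}
    (ha : ContinuousOn a U) (hφ : ContDiff ℝ 2 φ) (hφc : HasCompactSupport φ)
    (hφU : tsupport φ ⊆ U) (v w : E) : Integrable (fun p => a p * leviForm v w φ p) μ :=
  integrable_mul_of_tsupport_subset hU (continuous_ofReal.comp_continuousOn ha)
    (continuous_leviForm hφ v w) (hasCompactSupport_leviForm hφc v w)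
    ((tsupport_leviForm_subset v w φ).trans hφU)

variable [FiniteDimensional ℝ E] [μ.IsAddHaarMeasure]

lemma integral_mul_wirtingerDeriv (hU : IsOpen U) {f g : E → ℂ} (hf : ContDiffOn ℝ 1 f U)
    (hg : ContDiff ℝ 1 g) (hgc : HasCompactSupport g) (hgU : tsupport g ⊆ U) (v w : E) :
    ∫ p, f p * wirtingerDeriv v w g p ∂μ = -∫ p, wirtingerDeriv v w f p * g p ∂μ := by
  have hint₁ (u : E) : Integrable (fun p => f p * fderiv ℝ g p u) μ :=
    integrable_mul_of_tsupport_subset hU hf.continuousOn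
      ((hg.continuous_fderiv one_ne_zero).clm_apply continuous_const) (hgc.fderiv_apply ℝ u)
      ((tsupport_fderiv_apply_subset ℝ u).trans hgU)
  have hint₂ (u : E) : Integrable (fun p => fderiv ℝ f p u * g p) μ :=
    integrable_mul_of_tsupport_subset hU
      ((hf.continuousOn_fderiv_of_isOpen hU le_rfl).clm_apply continuousOn_const)
      hg.continuous hgc hgU
  have hparts (u : E) : ∫ p, f p * fderiv ℝ g p u ∂μ = -∫ p, fderiv ℝ f p u * g p ∂μ :=
    integral_mul_fderiv_eq_neg_fderiv_mul_of_integrable (hint₂ u) (hint₁ u)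
      (integrable_mul_of_tsupport_subset hU hf.continuousOn hg.continuous hgc hgU)
      (fun p hp => (hf.differentiableOn one_ne_zero).differentiableAt (hU.mem_nhds (hgU hp)))
      (fun p _ => hg.differentiable one_ne_zero p)
  calc ∫ p, f p * wirtingerDeriv v w g p ∂μ
      = ∫ p, (1 / 2 * (f p * fderiv ℝ g p v) - I / 2 * (f p * fderiv ℝ g p w)) ∂μ := by
        congr! 2 with p
        rw [wirtingerDeriv]
        ring
    _ = -∫ p, (1 / 2 * (fderiv ℝ f p v * g p) - I / 2 * (fderiv ℝ f p w * g p)) ∂μ := by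
        rw [integral_sub ((hint₁ v).const_mul _) ((hint₁ w).const_mul _),
          integral_sub ((hint₂ v).const_mul _) ((hint₂ w).const_mul _)]
        simp only [integral_const_mul, hparts]
        ring
    _ = -∫ p, wirtingerDeriv v w f p * g p ∂μ := by
        congr! 3 with p
        rw [wirtingerDeriv]
        ring

lemma integral_mul_wirtingerDeriv_eq_of_eqOn (hU : IsOpen U) {f g φ : E → ℂ} {v w v' w' : E}
    (hf : ContDiffOn ℝ 1 f U) (hg : ContDiffOn ℝ 1 g U)
    (hfg : U.EqOn (wirtingerDeriv v w f) (wirtingerDeriv v' w' g))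
    (hφ : ContDiff ℝ 1 φ) (hφc : HasCompactSupport φ) (hφU : tsupport φ ⊆ U) :
    ∫ p, f p * wirtingerDeriv v w φ p ∂μ = ∫ p, g p * wirtingerDeriv v' w' φ p ∂μ := by
  rw [integral_mul_wirtingerDeriv hU hf hφ hφc hφU, integral_mul_wirtingerDeriv hU hg hφ hφc hφU]
  congr! 3 with p
  by_cases hp : p ∈ U
  · rw [hfg hp]
  · rw [image_eq_zero_of_notMem_tsupport fun h => hp (hφU h), mul_zero, mul_zero]

section Closed

variable {a b : E → ℝ} {h φ : E → ℂ} {v w v' w' : E}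

lemma integral_mul_leviForm_eq (hU : IsOpen U) (ha : ContDiffOn ℝ 1 a U) (hb : ContDiffOn ℝ 1 b U)
    (hh : ContDiffOn ℝ 1 h U)
    (hah : U.EqOn (wirtingerDeriv v w fun q => (a q : ℂ)) (wirtingerDeriv v' w' h))
    (hbh : U.EqOn (wirtingerDeriv v' w' fun q => (b q : ℂ))
      (wirtingerDeriv v w fun q => conj (h q)))
    (hφ : ContDiff ℝ 2 φ) (hφc : HasCompactSupport φ) (hφU : tsupport φ ⊆ U) :
    ∫ p, a p * leviForm v w φ p ∂μ = ∫ p, b p * leviForm v' w' φ p ∂μ := by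
  have hbh' : U.EqOn (wirtingerDeriv v (-w) h) (wirtingerDeriv v' (-w') fun q => (b q : ℂ)) := by
    intro p hp
    simpa [conj_wirtingerDeriv] using (congrArg conj (hbh hp)).symm
  have htest (x y : E) : ContDiff ℝ 1 (wirtingerDeriv x y φ) ∧
      HasCompactSupport (wirtingerDeriv x y φ) ∧ tsupport (wirtingerDeriv x y φ) ⊆ U :=
    ⟨contDiff_wirtingerDeriv hφ le_rfl x y, hasCompactSupport_wirtingerDeriv hφc x y,
      (tsupport_wirtingerDeriv_subset x y φ).trans hφU⟩
  have ha' : ContDiffOn ℝ 1 (fun q => (a q : ℂ)) U := ofRealCLM.contDiff.comp_contDiffOn ha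
  have hb' : ContDiffOn ℝ 1 (fun q => (b q : ℂ)) U := ofRealCLM.contDiff.comp_contDiffOn hb
  obtain ⟨h₁, h₂, h₃⟩ := htest v (-w)
  obtain ⟨k₁, k₂, k₃⟩ := htest v' w'
  calc ∫ p, a p * wirtingerDeriv v w (wirtingerDeriv v (-w) φ) p ∂μ
      = ∫ p, h p * wirtingerDeriv v' w' (wirtingerDeriv v (-w) φ) p ∂μ :=
        integral_mul_wirtingerDeriv_eq_of_eqOn hU ha' hh hah h₁ h₂ h₃
    _ = ∫ p, h p * wirtingerDeriv v (-w) (wirtingerDeriv v' w' φ) p ∂μ := by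
        rw [wirtingerDeriv_comm hφ]
    _ = ∫ p, b p * wirtingerDeriv v' (-w') (wirtingerDeriv v' w' φ) p ∂μ :=
        integral_mul_wirtingerDeriv_eq_of_eqOn hU hh hb' hbh' k₁ k₂ k₃
    _ = ∫ p, b p * wirtingerDeriv v' w' (wirtingerDeriv v' (-w') φ) p ∂μ := by
        rw [wirtingerDeriv_comm hφ]

lemma setIntegral_re_mul_leviForm_sub_eq_zero (hU : IsOpen U) (ha : ContDiffOn ℝ 1 a U)
    (hb : ContDiffOn ℝ 1 b U) (hh : ContDiffOn ℝ 1 h U)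
    (hah : U.EqOn (wirtingerDeriv v w fun q => (a q : ℂ)) (wirtingerDeriv v' w' h))
    (hbh : U.EqOn (wirtingerDeriv v' w' fun q => (b q : ℂ))
      (wirtingerDeriv v w fun q => conj (h q)))
    (hφ : ContDiff ℝ 2 φ) (hφc : HasCompactSupport φ) (hφU : tsupport φ ⊆ U) :
    ∫ p in U, (a p * leviForm v w φ p - b p * leviForm v' w' φ p).re ∂μ = 0 := by
  have hinta := integrable_mul_leviForm (μ := μ) hU ha.continuousOn hφ hφc hφU v w
  have hintb := integrable_mul_leviForm (μ := μ) hU hb.continuousOn hφ hφc hφU v' w'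
  have hzero (x y p : E) (hp : p ∉ U) : leviForm x y φ p = 0 := image_eq_zero_of_notMem_tsupport
    fun hp' => hp (hφU (tsupport_leviForm_subset x y φ hp'))
  rw [setIntegral_eq_integral_of_forall_compl_eq_zero fun p hp => by simp [hzero _ _ p hp]]
  refine (integral_re (hinta.sub hintb)).trans ?_
  rw [integral_sub' hinta hintb, integral_mul_leviForm_eq hU ha hb hh hah hbh hφ hφc hφU, sub_self,
    map_zero]

theorem setIntegral_le_of_leviForm {Q : Set E} {s : E → ℝ} {c A B M : ℝ} (hU : IsOpen U)
    (hμU : μ U ≠ ⊤) (ha : ContDiffOn ℝ 1 a U) (hb : ContDiffOn ℝ 1 b U) (hh : ContDiffOn ℝ 1 h U)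
    (hah : U.EqOn (wirtingerDeriv v w fun q => (a q : ℂ)) (wirtingerDeriv v' w' h))
    (hbh : U.EqOn (wirtingerDeriv v' w' fun q => (b q : ℂ))
      (wirtingerDeriv v w fun q => conj (h q)))
    (ha₀ : ∀ p ∈ U, 0 ≤ a p) (hb₀ : ∀ p ∈ U, 0 ≤ b p) (hM : 0 ≤ M)
    (habM : ∀ p ∈ U \ Q, a p ≤ M ∧ b p ≤ M)
    (hφ : ContDiff ℝ 2 φ) (hφc : HasCompactSupport φ) (hφU : tsupport φ ⊆ U)
    (hA : ∀ p, ‖leviForm v w φ p‖ ≤ A) (hB : ∀ p, ‖leviForm v' w' φ p‖ ≤ B)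
    (hφQ : ∀ p ∈ Q, leviForm v w φ p = 1 ∧ leviForm v' w' φ p = -1)
    (hc : 0 ≤ c) (hs₀ : ∀ p ∈ U, 0 ≤ s p) (hs : ∀ p ∈ U, s p ≤ c * (a p + b p)) :
    ∫ p in U, s p ∂μ ≤ c * ((2 + A + B) * μ.real U) * M := by
  let F : E → ℝ := fun p => (a p * leviForm v w φ p - b p * leviForm v' w' φ p).re
  have hF : IntegrableOn F U μ := ((integrable_mul_leviForm hU ha.continuousOn hφ hφc hφU v w).sub
    (integrable_mul_leviForm hU hb.continuousOn hφ hφc hφU v' w')).re.integrableOn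
  have hF₀ : ∫ p in U, F p ∂μ = 0 :=
    setIntegral_re_mul_leviForm_sub_eq_zero hU ha hb hh hah hbh hφ hφc hφU
  have hab (p : E) (hp : p ∈ U) : a p + b p ≤ F p + (2 + A + B) * M := by
    by_cases hpQ : p ∈ Q
    · have hA₀ : 0 ≤ A := (norm_nonneg _).trans (hA p)
      have hB₀ : 0 ≤ B := (norm_nonneg _).trans (hB p)
      have hFp : F p = a p + b p := by simp [F, hφQ p hpQ]
      rw [hFp]
      exact le_add_of_nonneg_right (by positivity)
    · obtain ⟨haM, hbM⟩ := habM p ⟨hp, hpQ⟩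
      exact add_le_re_mul_sub_mul_add (ha₀ p hp) (hb₀ p hp) haM hbM (hA p) (hB p)
  have hconst : IntegrableOn (fun _ => (2 + A + B) * M) U μ := integrableOn_const hμU
  calc ∫ p in U, s p ∂μ
      ≤ ∫ p in U, c * (F p + (2 + A + B) * M) ∂μ :=
        integral_mono_of_nonneg (ae_restrict_of_forall_mem hU.measurableSet hs₀)
          ((hF.add hconst).const_mul c) (ae_restrict_of_forall_mem hU.measurableSet fun p hp =>
            (hs p hp).trans (mul_le_mul_of_nonneg_left (hab p hp) hc))
    _ = c * ((2 + A + B) * μ.real U) * M := by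
        rw [integral_const_mul, integral_add hF hconst, hF₀]
        simp only [setIntegral_const, smul_eq_mul]
        ring

end Closed

end WirtingerDeriv

lemma leviForm_mul_conj_sub_mul_conj (v p : ℂ × ℂ) :
    leviForm v (I • v) (fun q => q.1 * conj q.1 - q.2 * conj q.2) p =
      v.1 * conj v.1 - v.2 * conj v.2 := by
  have hantiholo : wirtingerDeriv v (-(I • v)) (fun q => q.1 * conj q.1 - q.2 * conj q.2) =
      fun q : ℂ × ℂ => q.1 * conj v.1 - q.2 * conj v.2 := by
    ext q
    have hconj (L : ℂ × ℂ →L[ℝ] ℂ) :=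
      L.hasFDerivAt.fun_mul ((conjCLE.toContinuousLinearMap ∘L L).hasFDerivAt (x := q))
    have h : HasFDerivAt (fun q : ℂ × ℂ => q.1 * conj q.1 - q.2 * conj q.2) _ q :=
      (hconj (.fst ℝ ℂ ℂ)).fun_sub (hconj (.snd ℝ ℂ ℂ))
    rw [wirtingerDeriv, h.fderiv]
    simp only [ContinuousLinearMap.coe_fst', ContinuousLinearMap.coe_snd',
      ContinuousLinearMap.comp_apply, ContinuousLinearEquiv.coe_coe,
      ContinuousAlgEquiv.coeCLE_apply, conjCAE_apply, sub_apply, add_apply, smul_apply,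
      smul_eq_mul, Prod.smul_fst, Prod.smul_snd, map_neg, map_mul, conj_I]
    linear_combination
      -(q.1 * conj v.1 - v.1 * conj q.1 - q.2 * conj v.2 + v.2 * conj q.2) / 2 * I_sq
  have hholo : HasFDerivAt (fun q : ℂ × ℂ => q.1 * conj v.1 - q.2 * conj v.2) _ p :=
    ((ContinuousLinearMap.fst ℝ ℂ ℂ).hasFDerivAt.mul_const _).fun_sub
      ((ContinuousLinearMap.snd ℝ ℂ ℂ).hasFDerivAt.mul_const _)
  rw [leviForm, hantiholo, wirtingerDeriv, hholo.fderiv]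
  simp only [ContinuousLinearMap.coe_fst', ContinuousLinearMap.coe_snd', sub_apply, smul_apply,
    smul_eq_mul, Prod.smul_fst, Prod.smul_snd]
  linear_combination -(v.1 * conj v.1 - v.2 * conj v.2) / 2 * I_sq

lemma exists_leviForm_eq_one_and_eq_neg_one {r R : ℝ} (hr : 0 < r) (hrR : r < R) :
    ∃ φ : ℂ × ℂ → ℂ, ContDiff ℝ 2 φ ∧ HasCompactSupport φ ∧ tsupport φ ⊆ closedBall 0 R ∧
      ∀ p ∈ ball 0 r, leviForm (1, 0) (I, 0) φ p = 1 ∧ leviForm (0, 1) (0, I) φ p = -1 := by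
  let χ : ContDiffBump (0 : ℂ × ℂ) := ⟨r, R, hr, hrR⟩
  let φ : ℂ × ℂ → ℂ := fun q => χ q * (q.1 * conj q.1 - q.2 * conj q.2)
  have hsupp : tsupport φ ⊆ closedBall 0 R := by
    refine tsupport_mul_subset_left.trans ?_
    refine (closure_mono fun p hp => ?_).trans χ.tsupport_eq.subset
    simpa using hp
  refine ⟨φ, ?_, .of_isClosed_subset (isCompact_closedBall 0 R) (isClosed_tsupport φ) hsupp, hsupp,
    fun p hp => ?_⟩
  · have hχ : ContDiff ℝ 2 fun q => (χ q : ℂ) := ofRealCLM.contDiff.comp χ.contDiff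
    have hconj : ContDiff ℝ 2 (conj : ℂ → ℂ) := conjCLE.contDiff
    fun_prop
  · have hφ : φ =ᶠ[𝓝 p] fun q => q.1 * conj q.1 - q.2 * conj q.2 := by
      filter_upwards [χ.eventuallyEq_one_of_mem_ball hp] with q hq
      simp [φ, hq]
    have hlevi (v : ℂ × ℂ) : leviForm v (I • v) φ p = v.1 * conj v.1 - v.2 * conj v.2 :=
      (leviForm_congr v (I • v) hφ).trans (leviForm_mul_conj_sub_mul_conj v p)
    exact ⟨by simpa using hlevi (1, 0), by simpa using hlevi (0, 1)⟩

/-- The norm of `ℂ × ℂ` is the maximum of the two moduli, so balls of `ℂ × ℂ` are bidiscs. -/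
theorem mass_estimate_bidisc_general {r : ℝ} (hr₀ : 0 < r) (hr₁ : r < 1) :
    ∃ C : ℝ, ∀ (t₁₁ t₂₂ : ℂ × ℂ → ℝ) (t₁₂ : ℂ × ℂ → ℂ) (M : ℝ),
      ContDiffOn ℝ 1 t₁₁ (ball 0 1) → ContDiffOn ℝ 1 t₂₂ (ball 0 1) →
      ContDiffOn ℝ 1 t₁₂ (ball 0 1) →
      (∀ p ∈ ball 0 1, 0 ≤ t₁₁ p) → (∀ p ∈ ball 0 1, 0 ≤ t₂₂ p) →
      (∀ p ∈ ball 0 1, ‖t₁₂ p‖ ^ 2 ≤ t₁₁ p * t₂₂ p) →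
      (∀ p ∈ ball 0 1, wirtingerFst (fun q => (t₂₂ q : ℂ)) p = wirtingerSnd t₁₂ p) →
      (∀ p ∈ ball 0 1, wirtingerSnd (fun q => (t₁₁ q : ℂ)) p =
        wirtingerFst (fun q => conj (t₁₂ q)) p) →
      (∀ p ∈ ball 0 1, r ≤ ‖p‖ → t₁₁ p ≤ M ∧ t₂₂ p ≤ M) →
      ∫ p in ball 0 1, (t₁₁ p + t₂₂ p + 2 * ‖t₁₂ p‖) ≤ C * M := by
  have : (volume : Measure (ℂ × ℂ)).IsAddHaarMeasure :=
    inferInstanceAs ((volume : Measure ℂ).prod volume).IsAddHaarMeasure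
  obtain ⟨R, hrR, hR₁⟩ := exists_between hr₁
  obtain ⟨φ, hφ, hφc, hφR, hφQ⟩ := exists_leviForm_eq_one_and_eq_neg_one hr₀ hrR
  have hbound (v w : ℂ × ℂ) : ∃ A, ∀ p, ‖leviForm v w φ p‖ ≤ A :=
    (hasCompactSupport_leviForm hφc v w).exists_bound_of_continuous (continuous_leviForm hφ v w)
  obtain ⟨A, hA⟩ := hbound (1, 0) (I, 0)
  obtain ⟨B, hB⟩ := hbound (0, 1) (0, I)
  refine ⟨2 * ((2 + A + B) * volume.real (ball (0 : ℂ × ℂ) 1)), ?_⟩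
  intro t₁₁ t₂₂ t₁₂ M h₁₁ h₂₂ h₁₂ hp₁₁ hp₂₂ hdet hclosed₁ hclosed₂ hM
  have hM₀ : 0 ≤ M := by
    have hp : ((r, 0) : ℂ × ℂ) ∈ ball 0 1 ∧ r ≤ ‖((r, 0) : ℂ × ℂ)‖ := by
      simp [abs_of_pos hr₀, hr₀.le, hr₁]
    exact (hp₁₁ _ hp.1).trans (hM _ hp.1 hp.2).1
  refine setIntegral_le_of_leviForm isOpen_ball measure_ball_lt_top.ne h₂₂ h₁₁ h₁₂ hclosed₁ hclosed₂
    hp₂₂ hp₁₁ hM₀ (Q := ball 0 r) (fun p hp => (hM p hp.1 (by simpa using hp.2)).symm) hφ hφc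
    (hφR.trans (closedBall_subset_ball hR₁)) hA hB hφQ zero_le_two (fun p hp => ?_) fun p hp => ?_
  · have := hp₁₁ p hp
    have := hp₂₂ p hp
    positivity
  · linarith [two_mul_le_add_of_sq_le_mul (hp₁₁ p hp) (hp₂₂ p hp) (hdet p hp)]

/-- **A priori mass estimate** (the analytic core of Theorem 2 of the paper,
formulas (2.4.1)–(2.4.3)): there is an absolute constant `C` such that for every
smooth closed positive `(1,1)`-form with coefficients `t₁₁, t₁₂, t₂₂` defined near
the closed unit bidisc and bounded by `M` on the closed Hartogs annulus, the total
mass of the form over the open bidisc is at most `C·M`. -/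
theorem mass_estimate_bidisc :
    ∃ C : ℝ, ∀ (U : Set (ℂ × ℂ)) (t₁₁ t₂₂ : ℂ × ℂ → ℝ) (t₁₂ : ℂ × ℂ → ℂ) (M : ℝ),
      IsOpen U →
      (closedBall (0 : ℂ) 1 ×ˢ closedBall (0 : ℂ) 1) ⊆ U →
      ContDiffOn ℝ 1 t₁₁ U → ContDiffOn ℝ 1 t₂₂ U → ContDiffOn ℝ 1 t₁₂ U →
      (∀ p ∈ U, 0 ≤ t₁₁ p) → (∀ p ∈ U, 0 ≤ t₂₂ p) →
      (∀ p ∈ U, ‖t₁₂ p‖ ^ 2 ≤ t₁₁ p * t₂₂ p) →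
      (∀ p ∈ U, wirtingerFst (fun q => (t₂₂ q : ℂ)) p = wirtingerSnd t₁₂ p) →
      (∀ p ∈ U, wirtingerSnd (fun q => (t₁₁ q : ℂ)) p =
        wirtingerFst (fun q => starRingEnd ℂ (t₁₂ q)) p) →
      0 ≤ M →
      (∀ p ∈ (closedBall (0 : ℂ) 1 ×ˢ closedBall (0 : ℂ) 1),
        (1 / 2 : ℝ) ≤ max ‖p.1‖ ‖p.2‖ →
        t₁₁ p ≤ M ∧ t₂₂ p ≤ M ∧ ‖t₁₂ p‖ ≤ M) →
      (∫ p in (ball (0 : ℂ) 1 ×ˢ ball (0 : ℂ) 1),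
        (t₁₁ p + t₂₂ p + 2 * ‖t₁₂ p‖)) ≤ C * M := by
  obtain ⟨C, hC⟩ := mass_estimate_bidisc_general one_half_pos one_half_lt_one
  refine ⟨C, fun U t₁₁ t₂₂ t₁₂ M _ hKU h₁₁ h₂₂ h₁₂ hp₁₁ hp₂₂ hdet hclosed₁ hclosed₂ _ hM => ?_⟩
  rw [closedBall_prod_same] at hKU hM
  have hU := ball_subset_closedBall.trans hKU
  rw [ball_prod_same]
  exact hC t₁₁ t₂₂ t₁₂ M (h₁₁.mono hU) (h₂₂.mono hU) (h₁₂.mono hU) (fun p hp => hp₁₁ p (hU hp))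
    (fun p hp => hp₂₂ p (hU hp)) (fun p hp => hdet p (hU hp)) (fun p hp => hclosed₁ p (hU hp))
    (fun p hp => hclosed₂ p (hU hp))
    fun p hp hr => (hM p (ball_subset_closedBall hp) hr).imp_right And.left
end

section
/- Let U ⊆ ℂ² be an open neighbourhood of the closed unit bidisc {(z₁,z₂) ∈ ℂ² : |z₁| ≤ 1 and |z₂| ≤ 1}, and let a, b : U → ℂ be C¹ functions satisfying ∂b/∂z₁ = ∂a/∂z₂ on U (Wirtinger derivatives). Define μ(z₁) = ∫_{|w| ≤ 1} b(z₁, w) dλ(w), where λ is Lebesgue measure on ℂ. Then for every z₁ with |z₁| < 1 the Wirtinger derivative ∂μ/∂z₁ exists and equals ½·∫₀^{2π} a(z₁, e^{iθ})·e^{−iθ} dθ, that is, ∂μ/∂z₁(z₁) = (i/2)·∮_{|w|=1} a(z₁, w) d(conj w). (This is the displayed intermediate computation (2.4.1)–(2.4.2) in the proof of the paper's Theorem 2: the derivative of the fibre integral of one coefficient of a closed (1,1)-form is a boundary integral of another coefficient.) -/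
open Metric MeasureTheory Complex

/-- The Wirtinger derivative `∂μ/∂z = ½(∂μ/∂x − i·∂μ/∂y)` of a one-variable
function `μ : ℂ → ℂ`, computed from the real Fréchet derivative. -/
noncomputable def wirtinger (μ : ℂ → ℂ) (z : ℂ) : ℂ :=
  (1 / 2 : ℂ) * (fderiv ℝ μ z 1 - Complex.I * fderiv ℝ μ z Complex.I)

/-! Differentiating under the integral sign turns `∂μ/∂z₁` into `∫ ∂b/∂z₁ dλ(w)`, which closedness
rewrites as `∫ ∂a/∂w dλ(w)`. The latter is a boundary integral because, in polar coordinates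
`w = c + r e^{iθ}`, the density `2 r ∂f/∂w` is the divergence `∂F/∂r + ∂G/∂θ` of
`F = r e^{-iθ} f` and `G = -i e^{-iθ} f`: in the divergence theorem on `[0, R] × [-π, π]` the two
`G`-terms cancel by periodicity and the side `r = 0` contributes nothing. -/

open Set Filter Topology

section ParametricIntegral

variable {𝕜 X Y E : Type*} [RCLike 𝕜] [NormedAddCommGroup X] [NormedSpace 𝕜 X]
  [NormedAddCommGroup Y] [NormedSpace 𝕜 Y] [NormedAddCommGroup E] [NormedSpace 𝕜 E]
  {b : X × Y → E} {x₀ : X} {K : Set Y}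

theorem continuousOn_fderiv_comp_inl_of_contDiffAt (hb : ∀ y ∈ K, ContDiffAt 𝕜 1 b (x₀, y)) :
    ContinuousOn (fun y ↦ fderiv 𝕜 b (x₀, y) ∘L .inl 𝕜 X Y) K := fun y hy ↦
  ((((hb y hy).continuousAt_fderiv one_ne_zero).comp (f := fun y ↦ (x₀, y)) (by fun_prop)).clm_comp
    continuousAt_const).continuousWithinAt

theorem hasFDerivAt_setIntegral_of_contDiffAt [NormedSpace ℝ E] [MeasurableSpace Y]
    [BorelSpace Y] (hK : IsCompact K) (ν : Measure Y) [IsFiniteMeasureOnCompacts ν]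
    (hb : ∀ y ∈ K, ContDiffAt 𝕜 1 b (x₀, y)) :
    HasFDerivAt (fun x ↦ ∫ y in K, b (x, y) ∂ν)
      (∫ y in K, fderiv 𝕜 b (x₀, y) ∘L .inl 𝕜 X Y ∂ν) x₀ := by
  let b' : X × Y → X →L[𝕜] E := fun p ↦ fderiv 𝕜 b p ∘L .inl 𝕜 X Y
  have hb' : ∀ y ∈ K, ContinuousAt b' (x₀, y) := fun y hy ↦
    ((hb y hy).continuousAt_fderiv one_ne_zero).clm_comp continuousAt_const
  have hb'K : ContinuousOn (fun y ↦ b' (x₀, y)) K := continuousOn_fderiv_comp_inl_of_contDiffAt hb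
  obtain ⟨C, hC⟩ := hK.exists_bound_of_continuousOn hb'K
  have hnear : ∀ᶠ x in 𝓝 x₀, ∀ y ∈ K, ContDiffAt 𝕜 1 b (x, y) ∧ ‖b' (x, y)‖ < C + 1 :=
    hK.eventually_forall_of_forall_eventually fun y hy ↦
      ((hb y hy).eventually (by simp)).and
        ((hb' y hy).norm.eventually_lt_const ((hC y hy).trans_lt (lt_add_one C)))
  have hbK : ∀ᶠ x in 𝓝 x₀, ContinuousOn (fun y ↦ b (x, y)) K :=
    hnear.mono fun x hx y hy ↦ ((hx y hy).1.continuousAt.comp (by fun_prop)).continuousWithinAt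
  refine hasFDerivAt_integral_of_dominated_of_fderiv_le (F' := fun x y ↦ b' (x, y))
    (bound := fun _ ↦ C + 1) hnear ?_ (hbK.self_of_nhds.integrableOn_compact hK)
    (hb'K.aestronglyMeasurable_of_isCompact hK hK.measurableSet)
    (ae_restrict_of_forall_mem hK.measurableSet fun y hy x hx ↦ (hx y hy).2.le)
    (integrableOn_const hK.measure_ne_top)
    (ae_restrict_of_forall_mem hK.measurableSet fun y hy x hx ↦ ?_)
  · exact hbK.mono fun x hx ↦ hx.aestronglyMeasurable_of_isCompact hK hK.measurableSet
  · exact ((hx y hy).1.differentiableAt one_ne_zero).hasFDerivAt.comp x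
      (hasFDerivAt_prodMk_left x y)

end ParametricIntegral

section CircleMap

theorem circleMap_mem_ball_iff {c : ℂ} {r R θ : ℝ} : circleMap c r θ ∈ ball c R ↔ |r| < R := by
  rw [mem_ball_iff_norm, circleMap_sub_center, norm_circleMap_zero]

theorem continuousOn_comp_circleMap {X : Type*} [TopologicalSpace X] {f : ℂ → X} {c : ℂ} {R : ℝ}
    (hf : ContinuousOn f (closedBall c R)) :
    ContinuousOn (fun p : ℝ × ℝ ↦ f (circleMap c p.1 p.2)) (Icc 0 R ×ˢ univ) := by
  refine hf.comp (Continuous.continuousOn ?_) fun p hp ↦ ?_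
  · unfold circleMap
    fun_prop
  · exact closedBall_subset_closedBall hp.1.2 (circleMap_mem_closedBall c hp.1.1 p.2)

theorem periodic_exp_neg_mul_I : Function.Periodic (fun θ : ℝ ↦ exp (-(θ * I))) (2 * Real.pi) :=
  fun θ ↦ by simp [add_mul, exp_add, exp_neg]

end CircleMap

theorem closedBall_ae_eq_ball {V : Type*} [NormedAddCommGroup V] [NormedSpace ℝ V]
    [MeasurableSpace V] [BorelSpace V] [FiniteDimensional ℝ V] [Nontrivial V] (ν : Measure V)
    [ν.IsAddHaarMeasure] (x : V) (r : ℝ) : closedBall x r =ᵐ[ν] ball x r :=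
  (ae_eq_of_subset_of_measure_ge ball_subset_closedBall
    (ν.addHaar_closedBall_eq_addHaar_ball x r).le measurableSet_ball.nullMeasurableSet
    measure_closedBall_lt_top.ne).symm

section PolarCoordinates

variable {E : Type*} [NormedAddCommGroup E] [NormedSpace ℝ E]

theorem integrableOn_comp_polarCoord_symm_iff {f : ℝ × ℝ → E} :
    IntegrableOn (fun p ↦ p.1 • f (polarCoord.symm p)) polarCoord.target ↔ Integrable f := by
  rw [← integrableOn_univ, ← integrableOn_congr_set_ae polarCoord_source_ae_eq_univ,
    ← polarCoord.symm_image_target_eq_source,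
    integrableOn_image_iff_integrableOn_abs_det_fderiv_smul volume
      polarCoord.open_target.measurableSet
      (fun p _ ↦ (hasFDerivAt_polarCoord_symm p).hasFDerivWithinAt) polarCoord.symm.injOn]
  refine integrableOn_congr_fun (fun p hp ↦ ?_) polarCoord.open_target.measurableSet
  simp only [det_fderivPolarCoordSymm, abs_of_pos (show 0 < p.1 from hp.1)]

theorem integrableOn_comp_complexPolarCoord_symm_iff {f : ℂ → E} :
    IntegrableOn (fun p ↦ p.1 • f (Complex.polarCoord.symm p)) polarCoord.target ↔
      Integrable f := by
  rw [← Complex.volume_preserving_equiv_real_prod.symm.integrable_comp_emb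
    measurableEquivRealProd.symm.measurableEmbedding]
  exact integrableOn_comp_polarCoord_symm_iff (f := f ∘ measurableEquivRealProd.symm)

theorem smul_indicator_ball_eqOn_polarCoord_target (f : ℂ → E) (c : ℂ) (R : ℝ) :
    EqOn (fun p ↦ p.1 • (ball c R).indicator f (c + Complex.polarCoord.symm p))
      ((Ioo 0 R ×ˢ Ioo (-Real.pi) Real.pi).indicator fun p ↦ p.1 • f (circleMap c p.1 p.2))
      polarCoord.target := by
  rintro ⟨r, θ⟩ ⟨hr : 0 < r, hθ : θ ∈ Ioo (-Real.pi) Real.pi⟩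
  have hmap : c + Complex.polarCoord.symm (r, θ) = circleMap c r θ := by
    simp [circleMap, Complex.exp_mul_I]
  have hmem : circleMap c r θ ∈ ball c R ↔ (r, θ) ∈ Ioo 0 R ×ˢ Ioo (-Real.pi) Real.pi := by
    rw [circleMap_mem_ball_iff, abs_of_pos hr]
    exact ⟨fun hrR ↦ ⟨⟨hr, hrR⟩, hθ⟩, fun h ↦ h.1.2⟩
  simp only [indicator, hmap, hmem, smul_ite, smul_zero]

theorem setIntegral_ball_eq_setIntegral_circleMap (f : ℂ → E) (c : ℂ) (R : ℝ) :
    ∫ w in ball c R, f w =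
      ∫ p in Ioo 0 R ×ˢ Ioo (-Real.pi) Real.pi, p.1 • f (circleMap c p.1 p.2) := by
  rw [← integral_indicator measurableSet_ball, ← integral_add_left_eq_self _ c,
    ← Complex.integral_comp_polarCoord_symm,
    setIntegral_congr_fun polarCoord.open_target.measurableSet
      (smul_indicator_ball_eqOn_polarCoord_target f c R),
    setIntegral_indicator (measurableSet_Ioo.prod measurableSet_Ioo), inter_eq_right.2]
  exact prod_mono_left Ioo_subset_Ioi_self

theorem integrableOn_ball_iff_integrableOn_circleMap {f : ℂ → E} {c : ℂ} {R : ℝ} :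
    IntegrableOn f (ball c R) ↔
      IntegrableOn (fun p : ℝ × ℝ ↦ p.1 • f (circleMap c p.1 p.2))
        (Ioo 0 R ×ˢ Ioo (-Real.pi) Real.pi) := by
  have hm : MeasurableSet (Ioo 0 R ×ˢ Ioo (-Real.pi) Real.pi) :=
    measurableSet_Ioo.prod measurableSet_Ioo
  have hsub : Ioo 0 R ×ˢ Ioo (-Real.pi) Real.pi ⊆ polarCoord.target :=
    prod_mono_left Ioo_subset_Ioi_self
  calc IntegrableOn f (ball c R)
    _ ↔ Integrable fun w ↦ (ball c R).indicator f (c + w) := by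
      rw [← integrable_indicator_iff measurableSet_ball]
      exact ((measurePreserving_add_left volume c).integrable_comp_emb
        (measurableEmbedding_addLeft c)).symm
    _ ↔ _ := by
      rw [← integrableOn_comp_complexPolarCoord_symm_iff,
        integrableOn_congr_fun (smul_indicator_ball_eqOn_polarCoord_target f c R)
          polarCoord.open_target.measurableSet, IntegrableOn, integrable_indicator_iff hm,
        IntegrableOn, Measure.restrict_restrict hm, inter_eq_left.2 hsub]

end PolarCoordinates

section Green

variable {E : Type*} [NormedAddCommGroup E] [NormedSpace ℂ E] {f : ℂ → E} {f' : ℂ → ℂ →L[ℝ] E}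
  {L : ℂ →L[ℝ] E} {c : ℂ} {R : ℝ} {p : ℝ × ℝ}

/-- The coefficient `½ (L 1 - i L i)` of `dz` in a real-linear map `L : ℂ → E`, written
`L = A dz + B dz̄`. When `L` is the differential of a function, this is its Wirtinger derivative
`∂/∂z`. Being itself a continuous linear map in `L`, it commutes with integrals. -/
noncomputable def dzCoeff : (ℂ →L[ℝ] E) →L[ℝ] E :=
  (1 / 2 : ℂ) • (ContinuousLinearMap.apply ℝ E (1 : ℂ) - I • ContinuousLinearMap.apply ℝ E I)

theorem dzCoeff_apply (L : ℂ →L[ℝ] E) : dzCoeff L = (1 / 2 : ℂ) • (L 1 - I • L I) :=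
  rfl

theorem map_sub_I_smul_map_I_mul (L : ℂ →L[ℝ] E) (ζ : ℂ) :
    L ζ - I • L (I * ζ) = (2 * ζ) • dzCoeff L := by
  have hL (x y : ℝ) : L (x + y * I) = (x : ℂ) • L 1 + (y : ℂ) • L I := by
    rw [coe_smul, coe_smul, ← map_smul, ← map_smul, ← map_add, real_smul, real_smul, mul_one]
  obtain ⟨x, y, rfl⟩ : ∃ x y : ℝ, ζ = x + y * I := ⟨ζ.re, ζ.im, (re_add_im ζ).symm⟩
  have hI : I * (x + y * I) = (-y : ℝ) + x * I := by
    rw [ofReal_neg]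
    linear_combination (y : ℂ) * I_sq
  rw [hI, hL, hL, dzCoeff_apply]
  match_scalars
  · ring
  · linear_combination y * I_sq

/-- Together with `greenFieldSnd`, the vector field `(F, G)` in polar coordinates `(r, θ)` around
`c` for which `F dθ - G dr` is the pullback of the form `i f dw̄`; its divergence represents
`d (i f dw̄) = 2 (∂f/∂w) dλ`. -/
noncomputable def greenFieldFst (f : ℂ → E) (c : ℂ) (p : ℝ × ℝ) : E :=
  (p.1 * exp (-(p.2 * I))) • f (circleMap c p.1 p.2)

/-- The angular component of the field whose radial component is `greenFieldFst`. -/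
noncomputable def greenFieldSnd (f : ℂ → E) (c : ℂ) (p : ℝ × ℝ) : E :=
  (-I * exp (-(p.2 * I))) • f (circleMap c p.1 p.2)

theorem hasFDerivAt_cexp_snd_mul (k : ℂ) (p : ℝ × ℝ) :
    HasFDerivAt (fun p : ℝ × ℝ ↦ exp (p.2 * k))
      ((ContinuousLinearMap.snd ℝ ℝ ℝ).smulRight (exp (p.2 * k) * k)) p := by
  have h := ((ofRealCLM.hasFDerivAt.comp p hasFDerivAt_snd).mul_const k).cexp
  refine h.congr_fderiv ?_
  ext <;> simp

theorem hasFDerivAt_ofReal_fst (p : ℝ × ℝ) :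
    HasFDerivAt (fun p : ℝ × ℝ ↦ (p.1 : ℂ))
      ((ContinuousLinearMap.fst ℝ ℝ ℝ).smulRight 1) p := by
  refine (ofRealCLM.hasFDerivAt.comp p hasFDerivAt_fst).congr_fderiv ?_
  ext <;> simp

theorem hasFDerivAt_circleMap_prod (c : ℂ) (p : ℝ × ℝ) :
    HasFDerivAt (fun p : ℝ × ℝ ↦ circleMap c p.1 p.2)
      ((ContinuousLinearMap.fst ℝ ℝ ℝ).smulRight (exp (p.2 * I)) +
        (ContinuousLinearMap.snd ℝ ℝ ℝ).smulRight (p.1 * (exp (p.2 * I) * I))) p := by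
  refine (((hasFDerivAt_ofReal_fst p).mul (hasFDerivAt_cexp_snd_mul I p)).const_add
    c).congr_fderiv ?_
  ext <;> simp

theorem hasFDerivAt_cexp_neg_snd (p : ℝ × ℝ) :
    HasFDerivAt (fun p : ℝ × ℝ ↦ exp (-(p.2 * I)))
      ((ContinuousLinearMap.snd ℝ ℝ ℝ).smulRight (exp (-(p.2 * I)) * -I)) p := by
  simpa only [mul_neg] using hasFDerivAt_cexp_snd_mul (-I) p

theorem differentiableAt_greenFieldFst (hf : DifferentiableAt ℝ f (circleMap c p.1 p.2)) :
    DifferentiableAt ℝ (greenFieldFst f c) p :=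
  ((hasFDerivAt_ofReal_fst p).mul (hasFDerivAt_cexp_neg_snd p)).differentiableAt.smul
    (hf.comp p (hasFDerivAt_circleMap_prod c p).differentiableAt)

theorem differentiableAt_greenFieldSnd (hf : DifferentiableAt ℝ f (circleMap c p.1 p.2)) :
    DifferentiableAt ℝ (greenFieldSnd f c) p :=
  ((hasFDerivAt_cexp_neg_snd p).const_mul (-I)).differentiableAt.smul
    (hf.comp p (hasFDerivAt_circleMap_prod c p).differentiableAt)

theorem fderiv_greenFieldFst_apply (hf : HasFDerivAt f L (circleMap c p.1 p.2)) :
    fderiv ℝ (greenFieldFst f c) p (1, 0) = exp (-(p.2 * I)) • f (circleMap c p.1 p.2) +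
      (p.1 * exp (-(p.2 * I))) • L (exp (p.2 * I)) := by
  have h : HasFDerivAt (greenFieldFst f c) _ p :=
    ((hasFDerivAt_ofReal_fst p).mul (hasFDerivAt_cexp_neg_snd p)).smul
      (hf.comp p (hasFDerivAt_circleMap_prod c p))
  simp [h.fderiv, add_comm]

theorem fderiv_greenFieldSnd_apply (hf : HasFDerivAt f L (circleMap c p.1 p.2)) :
    fderiv ℝ (greenFieldSnd f c) p (0, 1) = -(exp (-(p.2 * I)) • f (circleMap c p.1 p.2)) -
      (p.1 * exp (-(p.2 * I))) • I • L (I * exp (p.2 * I)) := by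
  have h : HasFDerivAt (greenFieldSnd f c) _ p :=
    ((hasFDerivAt_cexp_neg_snd p).const_mul (-I)).smul
      (hf.comp p (hasFDerivAt_circleMap_prod c p))
  have hL : L (p.1 * (exp (p.2 * I) * I)) = (p.1 : ℂ) • L (I * exp (p.2 * I)) := by
    rw [← real_smul, map_smul, coe_smul, mul_comm I]
  simp only [h.fderiv, add_apply, smul_apply, ContinuousLinearMap.comp_apply,
    ContinuousLinearMap.smulRight_apply, ContinuousLinearMap.coe_fst', ContinuousLinearMap.coe_snd',
    zero_smul, one_smul, zero_add, hL, smul_eq_mul]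
  match_scalars
  · ring
  · linear_combination exp (-(p.2 * I)) * I_sq

theorem divergence_greenField (hf : HasFDerivAt f L (circleMap c p.1 p.2)) :
    fderiv ℝ (greenFieldFst f c) p (1, 0) + fderiv ℝ (greenFieldSnd f c) p (0, 1) =
      p.1 • (2 : ℂ) • dzCoeff L := by
  have hexp : exp (-(p.2 * I)) * exp (p.2 * I) = 1 := by rw [← exp_add, neg_add_cancel, exp_zero]
  calc fderiv ℝ (greenFieldFst f c) p (1, 0) + fderiv ℝ (greenFieldSnd f c) p (0, 1)
    _ = (p.1 * exp (-(p.2 * I))) • (L (exp (p.2 * I)) - I • L (I * exp (p.2 * I))) := by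
      rw [fderiv_greenFieldFst_apply hf, fderiv_greenFieldSnd_apply hf]
      module
    _ = p.1 • (2 : ℂ) • dzCoeff L := by
      rw [map_sub_I_smul_map_I_mul, smul_smul, ← coe_smul, smul_smul]
      congr 1
      linear_combination 2 * (p.1 : ℂ) * hexp

theorem continuousOn_greenFieldFst (hf : ContinuousOn f (closedBall c R)) :
    ContinuousOn (greenFieldFst f c) (Icc 0 R ×ˢ univ) :=
  ContinuousOn.smul (by fun_prop) (continuousOn_comp_circleMap hf)

theorem continuousOn_greenFieldSnd (hf : ContinuousOn f (closedBall c R)) :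
    ContinuousOn (greenFieldSnd f c) (Icc 0 R ×ˢ univ) :=
  ContinuousOn.smul (by fun_prop) (continuousOn_comp_circleMap hf)

theorem greenFieldFst_zero (f : ℂ → E) (c : ℂ) (θ : ℝ) : greenFieldFst f c (0, θ) = 0 := by
  simp [greenFieldFst]

theorem periodic_greenFieldFst (f : ℂ → E) (c : ℂ) (r : ℝ) :
    Function.Periodic (fun θ ↦ greenFieldFst f c (r, θ)) (2 * Real.pi) := fun θ ↦ by
  simp only [greenFieldFst, periodic_exp_neg_mul_I θ, periodic_circleMap c r θ]

theorem periodic_greenFieldSnd (f : ℂ → E) (c : ℂ) (r : ℝ) :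
    Function.Periodic (fun θ ↦ greenFieldSnd f c (r, θ)) (2 * Real.pi) := fun θ ↦ by
  simp only [greenFieldSnd, periodic_exp_neg_mul_I θ, periodic_circleMap c r θ]

theorem integral_divergence_greenField (hR : 0 ≤ R) (hf : ContinuousOn f (closedBall c R))
    (hf' : ∀ w ∈ ball c R, HasFDerivAt f (f' w) w)
    (hi : IntegrableOn (fun w ↦ dzCoeff (f' w)) (ball c R)) :
    ∫ p in Ioo 0 R ×ˢ Ioo (-Real.pi) Real.pi, p.1 • (2 : ℂ) • dzCoeff (f' (circleMap c p.1 p.2)) =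
      ∫ θ in -Real.pi..Real.pi, greenFieldFst f c (R, θ) := by
  have hderiv : ∀ p ∈ Ioo 0 R ×ˢ Ioo (-Real.pi) Real.pi,
      HasFDerivAt f (f' (circleMap c p.1 p.2)) (circleMap c p.1 p.2) := fun p hp ↦
    hf' _ (circleMap_mem_ball_iff.2 ((abs_of_pos hp.1.1).trans_lt hp.1.2))
  have hIcc : Icc ((0 : ℝ), -Real.pi) (R, Real.pi) ⊆ Icc 0 R ×ˢ univ :=
    fun p hp ↦ ⟨⟨hp.1.1, hp.2.1⟩, trivial⟩
  have hae : (Icc ((0 : ℝ), -Real.pi) (R, Real.pi) : Set (ℝ × ℝ)) =ᵐ[volume]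
      Ioo 0 R ×ˢ Ioo (-Real.pi) Real.pi := by
    rw [← Icc_prod_Icc]
    exact Measure.set_prod_ae_eq Ioo_ae_eq_Icc.symm Ioo_ae_eq_Icc.symm
  have hdiv : EqOn (fun p ↦ p.1 • (2 : ℂ) • dzCoeff (f' (circleMap c p.1 p.2)))
      (fun p ↦ fderiv ℝ (greenFieldFst f c) p (1, 0) + fderiv ℝ (greenFieldSnd f c) p (0, 1))
      (Ioo 0 R ×ˢ Ioo (-Real.pi) Real.pi) := fun p hp ↦ (divergence_greenField (hderiv p hp)).symm
  have hm : MeasurableSet (Ioo 0 R ×ˢ Ioo (-Real.pi) Real.pi) :=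
    measurableSet_Ioo.prod measurableSet_Ioo
  have hperiod (r : ℝ) : greenFieldSnd f c (r, Real.pi) = greenFieldSnd f c (r, -Real.pi) := by
    convert periodic_greenFieldSnd f c r (-Real.pi) using 3
    ring
  rw [setIntegral_congr_fun hm hdiv, ← setIntegral_congr_set hae,
    integral_divergence_prod_Icc_of_hasFDerivAt_of_le _ _ _ _ _ _
      ⟨hR, neg_le_self Real.pi_pos.le⟩
      ((continuousOn_greenFieldFst hf).mono hIcc) ((continuousOn_greenFieldSnd hf).mono hIcc)
      (fun p hp ↦ (differentiableAt_greenFieldFst (hderiv p hp).differentiableAt).hasFDerivAt)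
      (fun p hp ↦ (differentiableAt_greenFieldSnd (hderiv p hp).differentiableAt).hasFDerivAt)]
  · simp only [hperiod, greenFieldFst_zero, sub_self, zero_add, intervalIntegral.integral_zero,
      sub_zero]
  · rw [integrableOn_congr_set_ae hae, ← integrableOn_congr_fun hdiv hm]
    exact integrableOn_ball_iff_integrableOn_circleMap.1 (hi.smul (2 : ℂ))

theorem setIntegral_ball_dzCoeff (hR : 0 ≤ R) (hf : ContinuousOn f (closedBall c R))
    (hf' : ∀ w ∈ ball c R, HasFDerivAt f (f' w) w)
    (hi : IntegrableOn (fun w ↦ dzCoeff (f' w)) (ball c R)) :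
    ∫ w in ball c R, dzCoeff (f' w) =
      (R / 2 : ℂ) • ∫ θ in 0..2 * Real.pi, exp (-(θ * I)) • f (circleMap c R θ) := by
  have hshift : ∫ θ in -Real.pi..Real.pi, greenFieldFst f c (R, θ) =
      ∫ θ in 0..2 * Real.pi, greenFieldFst f c (R, θ) := by
    convert (periodic_greenFieldFst f c R).intervalIntegral_add_eq (-Real.pi) 0 using 2 <;> ring
  calc ∫ w in ball c R, dzCoeff (f' w)
    _ = (1 / 2 : ℂ) • ∫ w in ball c R, (2 : ℂ) • dzCoeff (f' w) := by
      rw [integral_smul, one_div, inv_smul_smul₀ two_ne_zero]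
    _ = (1 / 2 : ℂ) • ∫ θ in 0..2 * Real.pi, greenFieldFst f c (R, θ) := by
      rw [setIntegral_ball_eq_setIntegral_circleMap, integral_divergence_greenField hR hf hf' hi,
        hshift]
    _ = (R / 2 : ℂ) • ∫ θ in 0..2 * Real.pi, exp (-(θ * I)) • f (circleMap c R θ) := by
      simp only [greenFieldFst, mul_smul, intervalIntegral.integral_smul]
      rw [smul_smul, one_div_mul_eq_div]

end Green

theorem wirtinger_deriv_fibre_integral_general {E : Type*} [NormedAddCommGroup E] [NormedSpace ℂ E]
    [CompleteSpace E] {a b : ℂ × ℂ → E} {z₁ c : ℂ} {R : ℝ} (hR : 0 ≤ R)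
    (ha : ContinuousOn (fun w ↦ a (z₁, w)) (closedBall c R))
    (ha' : ∀ w ∈ ball c R, DifferentiableAt ℝ a (z₁, w))
    (hb : ∀ w ∈ closedBall c R, ContDiffAt ℝ 1 b (z₁, w))
    (hclosed : ∀ w ∈ ball c R, dzCoeff (fderiv ℝ b (z₁, w) ∘L .inl ℝ ℂ ℂ) =
      dzCoeff (fderiv ℝ a (z₁, w) ∘L .inr ℝ ℂ ℂ)) :
    DifferentiableAt ℝ (fun z ↦ ∫ w in closedBall c R, b (z, w)) z₁ ∧
      dzCoeff (fderiv ℝ (fun z ↦ ∫ w in closedBall c R, b (z, w)) z₁) =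
        (R / 2 : ℂ) • ∫ θ in 0..2 * Real.pi, exp (-(θ * I)) • a (z₁, circleMap c R θ) := by
  have hK : IsCompact (closedBall c R) := isCompact_closedBall c R
  have hμ := hasFDerivAt_setIntegral_of_contDiffAt hK volume hb
  have hb' : IntegrableOn (fun w ↦ fderiv ℝ b (z₁, w) ∘L .inl ℝ ℂ ℂ) (closedBall c R) :=
    (continuousOn_fderiv_comp_inl_of_contDiffAt hb).integrableOn_compact hK
  have hdz : IntegrableOn (fun w ↦ dzCoeff (fderiv ℝ b (z₁, w) ∘L .inl ℝ ℂ ℂ)) (closedBall c R) :=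
    (dzCoeff (E := E)).integrable_comp hb'
  refine ⟨hμ.differentiableAt, ?_⟩
  calc dzCoeff (fderiv ℝ (fun z ↦ ∫ w in closedBall c R, b (z, w)) z₁)
    _ = ∫ w in closedBall c R, dzCoeff (fderiv ℝ b (z₁, w) ∘L .inl ℝ ℂ ℂ) := by
      rw [hμ.fderiv, dzCoeff.integral_comp_comm hb']
    _ = ∫ w in ball c R, dzCoeff (fderiv ℝ b (z₁, w) ∘L .inl ℝ ℂ ℂ) :=
      setIntegral_congr_set (closedBall_ae_eq_ball volume c R)
    _ = ∫ w in ball c R, dzCoeff (fderiv ℝ a (z₁, w) ∘L .inr ℝ ℂ ℂ) :=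
      setIntegral_congr_fun measurableSet_ball hclosed
    _ = (R / 2 : ℂ) • ∫ θ in 0..2 * Real.pi, exp (-(θ * I)) • a (z₁, circleMap c R θ) :=
      setIntegral_ball_dzCoeff hR ha
        (fun w hw ↦ (ha' w hw).hasFDerivAt.comp w (hasFDerivAt_prodMk_right z₁ w))
        ((integrableOn_congr_fun hclosed measurableSet_ball).1
          (hdz.mono_set ball_subset_closedBall))

/-- **Formulas (2.4.1)–(2.4.2) of the paper**: for `C¹` functions `a, b` near the
closed unit bidisc with `∂b/∂z₁ = ∂a/∂z₂`, the fibre integral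
`μ(z₁) = ∫_{|w|≤1} b(z₁,w) dλ(w)` is (real-)differentiable on the open unit disc
and its Wirtinger derivative is the boundary integral
`½·∫₀^{2π} a(z₁, e^{iθ})·e^{−iθ} dθ`. -/
theorem wirtinger_deriv_fibre_integral (U : Set (ℂ × ℂ)) (hU : IsOpen U)
    (hP : closedBall (0 : ℂ) 1 ×ˢ closedBall (0 : ℂ) 1 ⊆ U)
    (a b : ℂ × ℂ → ℂ) (ha : ContDiffOn ℝ 1 a U) (hb : ContDiffOn ℝ 1 b U)
    (hclosed : ∀ p ∈ U, wirtingerFst b p = wirtingerSnd a p)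
    (μ : ℂ → ℂ) (hμ : ∀ z₁ : ℂ, μ z₁ = ∫ w in closedBall (0 : ℂ) 1, b (z₁, w))
    (z₁ : ℂ) (hz₁ : ‖z₁‖ < 1) :
    DifferentiableAt ℝ μ z₁ ∧
      wirtinger μ z₁ = (1 / 2 : ℂ) * ∫ θ in (0 : ℝ)..(2 * Real.pi),
        a (z₁, Complex.exp (θ * Complex.I)) * Complex.exp (-(θ * Complex.I)) := by
  obtain rfl : μ = _ := funext hμ
  have hU' (w : ℂ) (hw : w ∈ closedBall 0 1) : U ∈ 𝓝 (z₁, w) :=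
    hU.mem_nhds (hP ⟨mem_closedBall_zero_iff.2 hz₁.le, hw⟩)
  have ha' (w : ℂ) (hw : w ∈ closedBall 0 1) : DifferentiableAt ℝ a (z₁, w) :=
    (ha.contDiffAt (hU' w hw)).differentiableAt one_ne_zero
  obtain ⟨hdiff, hderiv⟩ := wirtinger_deriv_fibre_integral_general zero_le_one
    (fun w hw ↦ ((ha' w hw).continuousAt.comp (by fun_prop)).continuousWithinAt)
    (fun w hw ↦ ha' w (ball_subset_closedBall hw)) (fun w hw ↦ hb.contDiffAt (hU' w hw))
    (fun w hw ↦ hclosed _ (mem_of_mem_nhds (hU' w (ball_subset_closedBall hw))))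
  exact ⟨hdiff, hderiv.trans (by simp [circleMap, mul_comm])⟩
end
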